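/- Let (π : A → B, ⊞, 0) be as in the context, and for b,b' ∈ B define the maps r(b,b')u := Σ ((ub₍₁₎)·b'₍₁₎)/(b₍₂₎b'₍₂₎), s(b,b')u := Σ (b₍₁₎·(ub'₍₁₎))/(b₍₂₎b'₍₂₎), s̄(b,b')u := Σ (b₍₁₎b'₍₁₎)\((b₍₂₎u)·b'₍₂₎) and l(b,b')u := Σ (b₍₁₎b'₍₁₎)\(b₍₂₎·(b'₍₂₎u)) (elements of B acting on A through 0). Then for all x, x' ∈ F(A) and b, b' ∈ B: (x·b)·(x'·b') = Σ (r(b₍₁₎,b'₍₁₎)x · s(b₍₂₎,b'₍₂₎)x') · (b₍₃₎b'₍₃₎) and (b·x)·(b'·x') = Σ (b₍₁₎b'₍₁₎) · (s̄(b₍₂₎,b'₍₂₎)x · l(b₍₃₎,b'₍₃₎)x'). -/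

import Mathlib

open TensorProduct

namespace FormalLoops

variable (k : Type*) [Field k]

/-- A unital, not necessarily associative, bialgebra with left and right divisions:
a cocommutative coassociative counital coalgebra together with a bilinear unital
multiplication and bilinear left/right divisions which are coalgebra morphisms and
satisfy the division cancellation laws (in Sweedler form). -/
structure DivBialg (A : Type*) [AddCommGroup A] [Module k A] where
  Δ : A →ₗ[k] A ⊗[k] A
  ε : A →ₗ[k] k
  mul : A →ₗ[k] A →ₗ[k] A
  one : A
  ld : A →ₗ[k] A →ₗ[k] A
  rd : A →ₗ[k] A →ₗ[k] A
  coassoc : ∀ u : A, (TensorProduct.assoc k A A A) ((Δ.rTensor A) (Δ u)) = (Δ.lTensor A) (Δ u)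
  counit_left : ∀ u : A, (TensorProduct.lid k A) ((ε.rTensor A) (Δ u)) = u
  counit_right : ∀ u : A, (TensorProduct.rid k A) ((ε.lTensor A) (Δ u)) = u
  cocomm : ∀ u : A, (TensorProduct.comm k A A) (Δ u) = Δ u
  Δ_one : Δ one = one ⊗ₜ[k] one
  ε_one : ε one = 1
  one_mul : ∀ u, mul one u = u
  mul_one : ∀ u, mul u one = u
  Δ_mul : ∀ u v, Δ (mul u v) = TensorProduct.map₂ mul mul (Δ u) (Δ v)
  ε_mul : ∀ u v, ε (mul u v) = ε u * ε v
  Δ_ld : ∀ u v, Δ (ld u v) = TensorProduct.map₂ ld ld (Δ u) (Δ v)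
  ε_ld : ∀ u v, ε (ld u v) = ε u * ε v
  Δ_rd : ∀ u v, Δ (rd u v) = TensorProduct.map₂ rd rd (Δ u) (Δ v)
  ε_rd : ∀ u v, ε (rd u v) = ε u * ε v
  /-- Σ u₍₁₎\(u₍₂₎v) = ε(u)v -/
  ld_mul_cancel : ∀ u v, TensorProduct.lift ld ((LinearMap.lTensor A (mul.flip v)) (Δ u)) = ε u • v
  /-- Σ u₍₁₎(u₍₂₎\v) = ε(u)v -/
  mul_ld_cancel : ∀ u v, TensorProduct.lift mul ((LinearMap.lTensor A (ld.flip v)) (Δ u)) = ε u • v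
  /-- Σ (vu₍₁₎)/u₍₂₎ = ε(u)v -/
  rd_mul_cancel : ∀ u v, TensorProduct.lift rd ((LinearMap.rTensor A (mul v)) (Δ u)) = ε u • v
  /-- Σ (v/u₍₁₎)u₍₂₎ = ε(u)v -/
  mul_rd_cancel : ∀ u v, TensorProduct.lift mul ((LinearMap.rTensor A (rd v)) (Δ u)) = ε u • v

variable {A B : Type*} [AddCommGroup A] [Module k A] [AddCommGroup B] [Module k B]

/-- A morphism of unital bialgebras with divisions. -/
structure DivBialgHom (SA : DivBialg k A) (SB : DivBialg k B) (π : A →ₗ[k] B) : Prop where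
  map_Δ : ∀ u, TensorProduct.map π π (SA.Δ u) = SB.Δ (π u)
  map_ε : ∀ u, SB.ε (π u) = SA.ε u
  map_mul : ∀ u v, π (SA.mul u v) = SB.mul (π u) (π v)
  map_one : π SA.one = SB.one
  map_ld : ∀ u v, π (SA.ld u v) = SB.ld (π u) (π v)
  map_rd : ∀ u v, π (SA.rd u v) = SB.rd (π u) (π v)

/-- `D` is a subcoalgebra w.r.t. the comultiplication `Δ`: `Δ(D) ⊆ D ⊗ D`. -/
def IsSubcoalg {M : Type*} [AddCommGroup M] [Module k M] (Δ : M →ₗ[k] M ⊗[k] M)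
    (D : Submodule k M) : Prop :=
  ∀ x ∈ D, Δ x ∈ LinearMap.range (TensorProduct.map D.subtype D.subtype)

/-- `F(A)`: the sum of all subcoalgebras `D ⊆ A` on which `π = ε(·) • 1`. -/
def Fsub (SA : DivBialg k A) (oneB : B) (π : A →ₗ[k] B) : Submodule k A :=
  sSup {D : Submodule k A | IsSubcoalg k SA.Δ D ∧ ∀ x ∈ D, π x = SA.ε x • oneB}

end FormalLoops

namespace FormalLoops

variable (k : Type*) [Field k]
variable {A B : Type*} [AddCommGroup A] [Module k A] [AddCommGroup B] [Module k B]

/-- Core of the Sweedler-type operators `u ↦ Σ d(α(b₍₁₎,b'₍₁₎), β(b₍₂₎,b'₍₂₎,u))`. -/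
noncomputable def sweedCoreL (d : A →ₗ[k] A →ₗ[k] A) (α : B →ₗ[k] B →ₗ[k] A)
    (β : B →ₗ[k] B →ₗ[k] A →ₗ[k] A) :
    ((B ⊗[k] B) ⊗[k] (B ⊗[k] B)) ⊗[k] A →ₗ[k] A :=
  TensorProduct.lift d ∘ₗ
  TensorProduct.map (TensorProduct.lift α) (TensorProduct.lift (TensorProduct.lift β)) ∘ₗ
  (TensorProduct.assoc k (B ⊗[k] B) (B ⊗[k] B) A).toLinearMap ∘ₗ
  LinearMap.rTensor A (TensorProduct.tensorTensorTensorComm k B B B B).toLinearMap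

/-- Core of the Sweedler-type operators `u ↦ Σ d(β(b₍₁₎,b'₍₁₎,u), α(b₍₂₎,b'₍₂₎))`. -/
noncomputable def sweedCoreR (d : A →ₗ[k] A →ₗ[k] A) (α : B →ₗ[k] B →ₗ[k] A)
    (β : B →ₗ[k] B →ₗ[k] A →ₗ[k] A) :
    ((B ⊗[k] B) ⊗[k] (B ⊗[k] B)) ⊗[k] A →ₗ[k] A :=
  TensorProduct.lift d.flip ∘ₗ
  TensorProduct.map (TensorProduct.lift α) (TensorProduct.lift (TensorProduct.lift β)) ∘ₗ
  (TensorProduct.assoc k (B ⊗[k] B) (B ⊗[k] B) A).toLinearMap ∘ₗ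
  LinearMap.rTensor A ((TensorProduct.comm k (B ⊗[k] B) (B ⊗[k] B)).toLinearMap ∘ₗ
    (TensorProduct.tensorTensorTensorComm k B B B B).toLinearMap)

/-- Core of the one-variable Sweedler-type operators `u ↦ Σ d(γ(b₍₁₎), δ(b₍₂₎,u))`. -/
noncomputable def sweedCore1L (d : A →ₗ[k] A →ₗ[k] A) (γ : B →ₗ[k] A)
    (δ : B →ₗ[k] A →ₗ[k] A) : (B ⊗[k] B) ⊗[k] A →ₗ[k] A :=
  TensorProduct.lift d ∘ₗ TensorProduct.map γ (TensorProduct.lift δ) ∘ₗ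
  (TensorProduct.assoc k B B A).toLinearMap

/-- Core of the one-variable Sweedler-type operators `u ↦ Σ d(δ(b₍₁₎,u), γ(b₍₂₎))`. -/
noncomputable def sweedCore1R (d : A →ₗ[k] A →ₗ[k] A) (γ : B →ₗ[k] A)
    (δ : B →ₗ[k] A →ₗ[k] A) : (B ⊗[k] B) ⊗[k] A →ₗ[k] A :=
  TensorProduct.lift d.flip ∘ₗ TensorProduct.map γ (TensorProduct.lift δ) ∘ₗ
  (TensorProduct.assoc k B B A).toLinearMap ∘ₗ
  LinearMap.rTensor A (TensorProduct.comm k B B).toLinearMap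

/-- `l(b,b') : u ↦ Σ (b₍₁₎b'₍₁₎)\(b₍₂₎·(b'₍₂₎u))`, where `B` acts through `z`. -/
noncomputable def opL (S : DivBialg k A) (ΔB : B →ₗ[k] B ⊗[k] B) (z : B →ₗ[k] A)
    (b b' : B) : A →ₗ[k] A :=
  sweedCoreL k S.ld (S.mul.compl₁₂ z z)
      ((LinearMap.llcomp k A A A).compl₁₂ (S.mul ∘ₗ z) (S.mul ∘ₗ z)) ∘ₗ
    TensorProduct.mk k ((B ⊗[k] B) ⊗[k] (B ⊗[k] B)) A (ΔB b ⊗ₜ[k] ΔB b')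

/-- `r(b,b') : u ↦ Σ ((ub₍₁₎)·b'₍₁₎)/(b₍₂₎b'₍₂₎)`. -/
noncomputable def opR (S : DivBialg k A) (ΔB : B →ₗ[k] B ⊗[k] B) (z : B →ₗ[k] A)
    (b b' : B) : A →ₗ[k] A :=
  sweedCoreR k S.rd (S.mul.compl₁₂ z z)
      (((LinearMap.llcomp k A A A).compl₁₂ (S.mul.flip ∘ₗ z) (S.mul.flip ∘ₗ z)).flip) ∘ₗ
    TensorProduct.mk k ((B ⊗[k] B) ⊗[k] (B ⊗[k] B)) A (ΔB b ⊗ₜ[k] ΔB b')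

/-- `s(b,b') : u ↦ Σ (b₍₁₎·(ub'₍₁₎))/(b₍₂₎b'₍₂₎)`. -/
noncomputable def opS (S : DivBialg k A) (ΔB : B →ₗ[k] B ⊗[k] B) (z : B →ₗ[k] A)
    (b b' : B) : A →ₗ[k] A :=
  sweedCoreR k S.rd (S.mul.compl₁₂ z z)
      ((LinearMap.llcomp k A A A).compl₁₂ (S.mul ∘ₗ z) (S.mul.flip ∘ₗ z)) ∘ₗ
    TensorProduct.mk k ((B ⊗[k] B) ⊗[k] (B ⊗[k] B)) A (ΔB b ⊗ₜ[k] ΔB b')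

/-- `s̄(b,b') : u ↦ Σ (b₍₁₎b'₍₁₎)\((b₍₂₎u)·b'₍₂₎)`. -/
noncomputable def opSbar (S : DivBialg k A) (ΔB : B →ₗ[k] B ⊗[k] B) (z : B →ₗ[k] A)
    (b b' : B) : A →ₗ[k] A :=
  sweedCoreL k S.ld (S.mul.compl₁₂ z z)
      (((LinearMap.llcomp k A A A).compl₁₂ (S.mul.flip ∘ₗ z) (S.mul ∘ₗ z)).flip) ∘ₗ
    TensorProduct.mk k ((B ⊗[k] B) ⊗[k] (B ⊗[k] B)) A (ΔB b ⊗ₜ[k] ΔB b')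

/-- `t(b) : u ↦ Σ b₍₁₎\(ub₍₂₎)`. -/
noncomputable def opT (S : DivBialg k A) (ΔB : B →ₗ[k] B ⊗[k] B) (z : B →ₗ[k] A)
    (b : B) : A →ₗ[k] A :=
  sweedCore1L k S.ld z (S.mul.flip ∘ₗ z) ∘ₗ TensorProduct.mk k (B ⊗[k] B) A (ΔB b)

/-- `t̄(b) : u ↦ Σ (b₍₁₎u)/b₍₂₎`. -/
noncomputable def opTbar (S : DivBialg k A) (ΔB : B →ₗ[k] B ⊗[k] B) (z : B →ₗ[k] A)
    (b : B) : A →ₗ[k] A :=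
  sweedCore1R k S.rd z (S.mul ∘ₗ z) ∘ₗ TensorProduct.mk k (B ⊗[k] B) A (ΔB b)

/-- `x` is a primitive element of the bialgebra. -/
def IsPrimitive (S : DivBialg k A) (x : A) : Prop :=
  S.Δ x = x ⊗ₜ[k] S.one + S.one ⊗ₜ[k] x

end FormalLoops

namespace FormalLoops

variable (k : Type*) [Field k]
variable {A B : Type*} [AddCommGroup A] [Module k A] [AddCommGroup B] [Module k B]

/-- The comultiplication of the tensor-product coalgebra `A ⊗ A`. -/
noncomputable def tcomul (SA : DivBialg k A) :
    A ⊗[k] A →ₗ[k] (A ⊗[k] A) ⊗[k] (A ⊗[k] A) :=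
  (TensorProduct.tensorTensorTensorComm k A A A A).toLinearMap ∘ₗ
    TensorProduct.map SA.Δ SA.Δ

/-- The counit of the tensor-product coalgebra `A ⊗ A`. -/
noncomputable def tcounit (SA : DivBialg k A) : A ⊗[k] A →ₗ[k] k :=
  (TensorProduct.lid k k).toLinearMap ∘ₗ TensorProduct.map SA.ε SA.ε

/-- The linear map `A ⊗ A → B`, `u ⊗ v ↦ ε(v) π(u)`. -/
noncomputable def pbFst (SA : DivBialg k A) (π : A →ₗ[k] B) : A ⊗[k] A →ₗ[k] B :=
  (TensorProduct.rid k B).toLinearMap ∘ₗ TensorProduct.map π SA.ε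

/-- The linear map `A ⊗ A → B`, `u ⊗ v ↦ ε(u) π(v)`. -/
noncomputable def pbSnd (SA : DivBialg k A) (π : A →ₗ[k] B) : A ⊗[k] A →ₗ[k] B :=
  (TensorProduct.lid k B).toLinearMap ∘ₗ TensorProduct.map SA.ε π

/-- The pullback `A ⊗_B A`: the sum of all subcoalgebras of the tensor-product
coalgebra `A ⊗ A` on which `u ⊗ v ↦ ε(v)π(u)` and `u ⊗ v ↦ ε(u)π(v)` agree. -/
noncomputable def pbSub (SA : DivBialg k A) (π : A →ₗ[k] B) : Submodule k (A ⊗[k] A) :=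
  sSup {C : Submodule k (A ⊗[k] A) | IsSubcoalg k (tcomul k SA) C ∧
    ∀ t ∈ C, pbFst k SA π t = pbSnd k SA π t}

/-- The data of an abelian group `(π : A → B, ⊞, 0)` in the comma category over `B`:
a linear map `⊞ = bp : A ⊗_B A → A` which lies over `B`, is a coalgebra morphism
(witnessed by a corestriction `Δpb` of the comultiplication of `A ⊗ A` to `A ⊗_B A`),
is multiplicative, commutative, associative on `F(A)` and has `0 = z ∘ π` as unit. -/
structure BoxPlusData (SA : DivBialg k A) (SB : DivBialg k B)
    (π : A →ₗ[k] B) (z : B →ₗ[k] A) where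
  bp : ↥(pbSub k SA π) →ₗ[k] A
  Δpb : ↥(pbSub k SA π) →ₗ[k] (↥(pbSub k SA π) ⊗[k] ↥(pbSub k SA π))
  Δpb_compat : ∀ t : pbSub k SA π,
    TensorProduct.map (pbSub k SA π).subtype (pbSub k SA π).subtype (Δpb t)
      = tcomul k SA (t : A ⊗[k] A)
  π_bp : ∀ t : pbSub k SA π, π (bp t) = pbFst k SA π (t : A ⊗[k] A)
  Δ_bp : ∀ t : pbSub k SA π, SA.Δ (bp t) = TensorProduct.map bp bp (Δpb t)
  ε_bp : ∀ t : pbSub k SA π, SA.ε (bp t) = tcounit k SA (t : A ⊗[k] A)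
  bp_mul : ∀ (t t' : pbSub k SA π)
      (h : TensorProduct.map₂ SA.mul SA.mul (t : A ⊗[k] A) (t' : A ⊗[k] A) ∈ pbSub k SA π),
      bp ⟨TensorProduct.map₂ SA.mul SA.mul (t : A ⊗[k] A) (t' : A ⊗[k] A), h⟩
        = SA.mul (bp t) (bp t')
  bp_flip : ∀ (t : pbSub k SA π)
      (h : (TensorProduct.comm k A A) (t : A ⊗[k] A) ∈ pbSub k SA π),
      bp ⟨(TensorProduct.comm k A A) (t : A ⊗[k] A), h⟩ = bp t
  bp_assoc : ∀ x ∈ Fsub k SA SB.one π, ∀ y ∈ Fsub k SA SB.one π, ∀ w ∈ Fsub k SA SB.one π,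
      ∀ (h1 : x ⊗ₜ[k] y ∈ pbSub k SA π) (h2 : y ⊗ₜ[k] w ∈ pbSub k SA π)
        (h3 : (bp ⟨x ⊗ₜ[k] y, h1⟩) ⊗ₜ[k] w ∈ pbSub k SA π)
        (h4 : x ⊗ₜ[k] (bp ⟨y ⊗ₜ[k] w, h2⟩) ∈ pbSub k SA π),
      bp ⟨(bp ⟨x ⊗ₜ[k] y, h1⟩) ⊗ₜ[k] w, h3⟩ = bp ⟨x ⊗ₜ[k] (bp ⟨y ⊗ₜ[k] w, h2⟩), h4⟩
  bp_unit_right : ∀ (u : A)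
      (h : (LinearMap.lTensor A (z ∘ₗ π)) (SA.Δ u) ∈ pbSub k SA π),
      bp ⟨(LinearMap.lTensor A (z ∘ₗ π)) (SA.Δ u), h⟩ = u
  bp_unit_left : ∀ (u : A)
      (h : (LinearMap.rTensor A (z ∘ₗ π)) (SA.Δ u) ∈ pbSub k SA π),
      bp ⟨(LinearMap.rTensor A (z ∘ₗ π)) (SA.Δ u), h⟩ = u

end FormalLoops

namespace FormalLoops

variable (k : Type*) [Field k]
variable {A B : Type*} [AddCommGroup A] [Module k A] [AddCommGroup B] [Module k B]

/-- For a fixed `x : A`, the linear map `b ⊗ b' ↦ (op(b,b'))(x)` associated with a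
Sweedler-type operator core. -/
noncomputable def hatOf (core : ((B ⊗[k] B) ⊗[k] (B ⊗[k] B)) ⊗[k] A →ₗ[k] A)
    (ΔB : B →ₗ[k] B ⊗[k] B) (x : A) : B ⊗[k] B →ₗ[k] A :=
  core ∘ₗ (TensorProduct.mk k ((B ⊗[k] B) ⊗[k] (B ⊗[k] B)) A).flip x ∘ₗ
    TensorProduct.map ΔB ΔB

/-- For a fixed `x : A`, the linear map `b ↦ (op(b))(x)` associated with a one-variable
Sweedler-type operator core. -/
noncomputable def hat1Of (core : (B ⊗[k] B) ⊗[k] A →ₗ[k] A)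
    (ΔB : B →ₗ[k] B ⊗[k] B) (x : A) : B →ₗ[k] A :=
  core ∘ₗ (TensorProduct.mk k (B ⊗[k] B) A).flip x ∘ₗ ΔB

/-- `b ⊗ b' ↦ r(b,b')(x)`. -/
noncomputable def rHat (S : DivBialg k A) (ΔB : B →ₗ[k] B ⊗[k] B) (z : B →ₗ[k] A)
    (x : A) : B ⊗[k] B →ₗ[k] A :=
  hatOf k (sweedCoreR k S.rd (S.mul.compl₁₂ z z)
      (((LinearMap.llcomp k A A A).compl₁₂ (S.mul.flip ∘ₗ z) (S.mul.flip ∘ₗ z)).flip)) ΔB x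

/-- `b ⊗ b' ↦ s(b,b')(x)`. -/
noncomputable def sHat (S : DivBialg k A) (ΔB : B →ₗ[k] B ⊗[k] B) (z : B →ₗ[k] A)
    (x : A) : B ⊗[k] B →ₗ[k] A :=
  hatOf k (sweedCoreR k S.rd (S.mul.compl₁₂ z z)
      ((LinearMap.llcomp k A A A).compl₁₂ (S.mul ∘ₗ z) (S.mul.flip ∘ₗ z))) ΔB x

/-- `b ⊗ b' ↦ l(b,b')(x)`. -/
noncomputable def lHat (S : DivBialg k A) (ΔB : B →ₗ[k] B ⊗[k] B) (z : B →ₗ[k] A)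
    (x : A) : B ⊗[k] B →ₗ[k] A :=
  hatOf k (sweedCoreL k S.ld (S.mul.compl₁₂ z z)
      ((LinearMap.llcomp k A A A).compl₁₂ (S.mul ∘ₗ z) (S.mul ∘ₗ z))) ΔB x

/-- `b ⊗ b' ↦ s̄(b,b')(x)`. -/
noncomputable def sbarHat (S : DivBialg k A) (ΔB : B →ₗ[k] B ⊗[k] B) (z : B →ₗ[k] A)
    (x : A) : B ⊗[k] B →ₗ[k] A :=
  hatOf k (sweedCoreL k S.ld (S.mul.compl₁₂ z z)
      (((LinearMap.llcomp k A A A).compl₁₂ (S.mul.flip ∘ₗ z) (S.mul ∘ₗ z)).flip)) ΔB x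

/-- `b ↦ t(b)(x)`. -/
noncomputable def tHat (S : DivBialg k A) (ΔB : B →ₗ[k] B ⊗[k] B) (z : B →ₗ[k] A)
    (x : A) : B →ₗ[k] A :=
  hat1Of k (sweedCore1L k S.ld z (S.mul.flip ∘ₗ z)) ΔB x

/-- `b ↦ t̄(b)(x)`. -/
noncomputable def tbarHat (S : DivBialg k A) (ΔB : B →ₗ[k] B ⊗[k] B) (z : B →ₗ[k] A)
    (x : A) : B →ₗ[k] A :=
  hat1Of k (sweedCore1R k S.rd z (S.mul ∘ₗ z)) ΔB x

/-- The iterated comultiplication `b ↦ Σ b₍₁₎ ⊗ (b₍₂₎ ⊗ b₍₃₎)`. -/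
noncomputable def comul2 (ΔB : B →ₗ[k] B ⊗[k] B) : B →ₗ[k] B ⊗[k] (B ⊗[k] B) :=
  LinearMap.lTensor B ΔB ∘ₗ ΔB

end FormalLoops

/-!
Convolution of linear maps out of a cocommutative coalgebra turns Sweedler identities into
identities without indices.

The axioms for `⊞` give
`u · u' = ⊞((Σ u₍₁₎ ⊗ 0(π(u₍₂₎))) · (Σ 0(π(u'₍₁₎)) ⊗ u'₍₂₎))`.
For `u = x · b` and `u' = x' · b'` with `x, x' ∈ F(A)`, the two tensor factors inside `⊞` are
`(x · b) · b'` and `b · (x' · b')`, which both lie over `b b'`. Dividing them by `b b'` on the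
right gives `r(b,b')x` and `s(b,b')x'`, which are coinvariant and hence lie in `F(A)`. On such
elements `⊞` is the multiplication of `A`, and its multiplicativity restores the factor `b b'`.
The second formula is the first one in the opposite bialgebras.
-/

namespace FormalLoops

open Coalgebra

section Convolution

variable {R : Type*} [CommSemiring R] {C M M' N N' Q Q' P : Type*}
  [AddCommMonoid C] [Module R C] [Coalgebra R C]
  [AddCommMonoid M] [Module R M] [AddCommMonoid M'] [Module R M']
  [AddCommMonoid N] [Module R N] [AddCommMonoid N'] [Module R N']
  [AddCommMonoid Q] [Module R Q] [AddCommMonoid Q'] [Module R Q']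
  [AddCommMonoid P] [Module R P]

/-- The convolution `c ↦ Σ d (f c₍₁₎) (g c₍₂₎)` of two linear maps out of a coalgebra along a
bilinear map `d`. -/
noncomputable def conv (d : M →ₗ[R] N →ₗ[R] Q) (f : C →ₗ[R] M) (g : C →ₗ[R] N) : C →ₗ[R] Q :=
  TensorProduct.lift d ∘ₗ TensorProduct.map f g ∘ₗ comul

lemma conv_apply (d : M →ₗ[R] N →ₗ[R] Q) (f : C →ₗ[R] M) (g : C →ₗ[R] N) (c : C) :
    conv d f g c = TensorProduct.lift d (TensorProduct.map f g (comul c)) := rfl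

lemma conv_mk (f : C →ₗ[R] M) (g : C →ₗ[R] N) :
    conv (TensorProduct.mk R M N) f g = TensorProduct.map f g ∘ₗ comul := by
  rw [conv, TensorProduct.lift_mk, LinearMap.id_comp]

lemma comp_conv (φ : Q →ₗ[R] Q') {d : M →ₗ[R] N →ₗ[R] Q} {d' : M' →ₗ[R] N' →ₗ[R] Q'}
    {f : C →ₗ[R] M} {f' : C →ₗ[R] M'} {g : C →ₗ[R] N} {g' : C →ₗ[R] N'}
    (h : ∀ c c', φ (d (f c) (g c')) = d' (f' c) (g' c')) :
    φ ∘ₗ conv d f g = conv d' f' g' := by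
  have h' : φ ∘ₗ TensorProduct.lift d ∘ₗ TensorProduct.map f g =
      TensorProduct.lift d' ∘ₗ TensorProduct.map f' g' := by
    ext c c'
    exact h c c'
  exact congrArg (· ∘ₗ comul) h'

lemma conv_mem {d : M →ₗ[R] N →ₗ[R] Q} {f : C →ₗ[R] M} {g : C →ₗ[R] N} {S : Submodule R Q}
    (h : ∀ c c', d (f c) (g c') ∈ S) (c : C) : conv d f g c ∈ S := by
  rw [conv_apply]
  induction comul (R := R) c with
  | zero => simp
  | tmul x y => exact h x y
  | add s t hs ht => simpa only [map_add] using S.add_mem hs ht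

lemma conv_of_counit {d : M →ₗ[R] N →ₗ[R] Q} {f : C →ₗ[R] M} {g : C →ₗ[R] N}
    {φ : C →ₗ[R] Q} (h : ∀ c c', d (f c) (g c') = counit (R := R) c' • φ c) :
    conv d f g = φ := by
  have h' : TensorProduct.lift d ∘ₗ TensorProduct.map f g =
      φ ∘ₗ (TensorProduct.rid R C).toLinearMap ∘ₗ counit.lTensor C := by
    ext c c'
    simp [h]
  ext c
  simpa [conv_apply] using LinearMap.congr_fun h' (comul c)

lemma conv_conv_of_assoc {d : Q →ₗ[R] N →ₗ[R] P} {e : M →ₗ[R] M' →ₗ[R] Q}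
    {d' : M →ₗ[R] Q' →ₗ[R] P} {e' : M' →ₗ[R] N →ₗ[R] Q'}
    (h : ∀ x y w, d (e x y) w = d' x (e' y w))
    (f : C →ₗ[R] M) (g : C →ₗ[R] M') (m : C →ₗ[R] N) :
    conv d (conv e f g) m = conv d' f (conv e' g m) := by
  have h₁ : TensorProduct.lift d ∘ₗ TensorProduct.map (conv e f g) m =
      TensorProduct.lift d ∘ₗ TensorProduct.map (TensorProduct.lift e) LinearMap.id ∘ₗ
        TensorProduct.map (TensorProduct.map f g) m ∘ₗ comul.rTensor C := by
    ext; rfl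
  have h₂ : TensorProduct.lift d' ∘ₗ TensorProduct.map f (conv e' g m) =
      TensorProduct.lift d' ∘ₗ TensorProduct.map LinearMap.id (TensorProduct.lift e') ∘ₗ
        TensorProduct.map f (TensorProduct.map g m) ∘ₗ comul.lTensor C := by
    ext; rfl
  have h₃ : TensorProduct.lift d ∘ₗ TensorProduct.map (TensorProduct.lift e) LinearMap.id ∘ₗ
        TensorProduct.map (TensorProduct.map f g) m =
      TensorProduct.lift d' ∘ₗ TensorProduct.map LinearMap.id (TensorProduct.lift e') ∘ₗ
        TensorProduct.map f (TensorProduct.map g m) ∘ₗ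
          (TensorProduct.assoc R C C C).toLinearMap := by
    ext
    simp [h]
  ext c
  have h₁c := LinearMap.congr_fun h₁ (comul c)
  have h₂c := LinearMap.congr_fun h₂ (comul c)
  have h₃c := LinearMap.congr_fun h₃ (comul.rTensor C (comul c))
  simp only [LinearMap.comp_apply, LinearEquiv.coe_coe, coassoc_apply] at h₁c h₂c h₃c
  rw [conv_apply, conv_apply, h₁c, h₂c, h₃c]

/-- `Γ (f c) = Σ f c₍₁₎ ⊗ f' c₍₂₎`. With `Γ` a comultiplication and `f' = f` this says that `f`
preserves comultiplication; with `Γ` a coaction it says that `f` lies over `f'`. -/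
def Splits (Γ : M →ₗ[R] M ⊗[R] M') (f : C →ₗ[R] M) (f' : C →ₗ[R] M') : Prop :=
  Γ ∘ₗ f = conv (TensorProduct.mk R M M') f f'

lemma Splits.comp_eq {Γ : M →ₗ[R] M ⊗[R] M'} {f : C →ₗ[R] M} {f' : C →ₗ[R] M'}
    (h : Splits Γ f f') : Γ ∘ₗ f = conv (TensorProduct.mk R M M') f f' := h

lemma Splits.map {Γ : M →ₗ[R] M ⊗[R] M'} {Γ' : N →ₗ[R] N ⊗[R] N'} {φ : M →ₗ[R] N}
    {φ' : M' →ₗ[R] N'} (hφ : ∀ u, Γ' (φ u) = TensorProduct.map φ φ' (Γ u))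
    {f : C →ₗ[R] M} {f' : C →ₗ[R] M'} (h : Splits Γ f f') :
    Splits Γ' (φ ∘ₗ f) (φ' ∘ₗ f') := by
  have hφf : Γ' ∘ₗ φ ∘ₗ f = TensorProduct.map φ φ' ∘ₗ Γ ∘ₗ f :=
    LinearMap.ext fun c ↦ hφ (f c)
  rw [Splits, hφf, h.comp_eq]
  exact comp_conv _ fun _ _ ↦ rfl

lemma conv_conv_cancel {d : Q →ₗ[R] N →ₗ[R] M} {e : M →ₗ[R] N →ₗ[R] Q}
    {Γ : N →ₗ[R] N ⊗[R] N} {η : N →ₗ[R] R}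
    (h : ∀ u v, TensorProduct.lift d ((e v).rTensor N (Γ u)) = η u • v) {m : C →ₗ[R] N}
    (hΓ : Splits Γ m m) (hη : η ∘ₗ m = counit) (f : C →ₗ[R] M) :
    conv d (conv e f m) m = f := by
  rw [conv_conv_of_assoc (d' := (LinearMap.rTensorHom N ∘ₗ e).compr₂ (TensorProduct.lift d))
    (e' := TensorProduct.mk R N N) (fun _ _ _ ↦ rfl), ← hΓ.comp_eq]
  refine conv_of_counit fun c c' ↦ ?_
  rw [← hη]
  exact h (m c') (f c)

section Cocommutative

variable [IsCocomm R C]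

lemma conv_flip (d : M →ₗ[R] N →ₗ[R] Q) (f : C →ₗ[R] M) (g : C →ₗ[R] N) :
    conv d.flip g f = conv d f g := by
  have h : TensorProduct.lift d.flip ∘ₗ TensorProduct.map g f ∘ₗ
      (TensorProduct.comm R C C).toLinearMap = TensorProduct.lift d ∘ₗ TensorProduct.map f g := by
    ext
    rfl
  ext c
  simpa [conv_apply] using LinearMap.congr_fun h (comul c)

lemma comul_comul_comm (c : C) :
    TensorProduct.tensorTensorTensorComm R C C C C
        (TensorProduct.map comul comul (comul (R := R) c)) =
      TensorProduct.map comul comul (comul (R := R) c) :=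
  (CoalgHomClass.map_comp_comul_apply (comulCoalgHom R C) c).symm

lemma conv_map₂_conv (d : M →ₗ[R] N →ₗ[R] Q) (e : M' →ₗ[R] N' →ₗ[R] Q')
    (f : C →ₗ[R] M) (f' : C →ₗ[R] M') (g : C →ₗ[R] N) (g' : C →ₗ[R] N') :
    conv (TensorProduct.map₂ d e) (conv (TensorProduct.mk R M M') f f')
        (conv (TensorProduct.mk R N N') g g') =
      conv (TensorProduct.mk R Q Q') (conv d f g) (conv e f' g') := by
  have h₁ : TensorProduct.lift (TensorProduct.map₂ d e) ∘ₗ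
      TensorProduct.map (TensorProduct.map f f') (TensorProduct.map g g') =
      TensorProduct.map (TensorProduct.lift d ∘ₗ TensorProduct.map f g)
        (TensorProduct.lift e ∘ₗ TensorProduct.map f' g') ∘ₗ
        (TensorProduct.tensorTensorTensorComm R C C C C).toLinearMap := by
    ext
    simp
  ext c
  have h₂ := LinearMap.congr_fun h₁ (TensorProduct.map comul comul (comul (R := R) c))
  simp only [LinearMap.comp_apply, LinearEquiv.coe_coe, comul_comul_comm] at h₂
  rw [conv_mk, conv_mk, conv_mk]
  simp only [conv, LinearMap.comp_apply]
  simpa only [← LinearMap.comp_apply, TensorProduct.map_comp, LinearMap.comp_assoc] using h₂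

lemma splits_conv {ΓM : M →ₗ[R] M ⊗[R] M'} {ΓN : N →ₗ[R] N ⊗[R] N'}
    {ΓQ : Q →ₗ[R] Q ⊗[R] Q'} {d : M →ₗ[R] N →ₗ[R] Q} {d' : M' →ₗ[R] N' →ₗ[R] Q'}
    (hd : ∀ u v, ΓQ (d u v) = TensorProduct.map₂ d d' (ΓM u) (ΓN v))
    {f : C →ₗ[R] M} {f' : C →ₗ[R] M'} {g : C →ₗ[R] N} {g' : C →ₗ[R] N'}
    (hf : Splits ΓM f f') (hg : Splits ΓN g g') :
    Splits ΓQ (conv d f g) (conv d' f' g') := by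
  rw [Splits, ← conv_map₂_conv, ← hf.comp_eq, ← hg.comp_eq]
  exact comp_conv ΓQ fun c c' ↦ hd (f c) (g c')

end Cocommutative

end Convolution

section TensorProduct

variable {R : Type*} [CommSemiring R] {M M' N N' Q Q' : Type*}
  [AddCommMonoid M] [Module R M] [AddCommMonoid M'] [Module R M']
  [AddCommMonoid N] [Module R N] [AddCommMonoid N'] [Module R N']
  [AddCommMonoid Q] [Module R Q] [AddCommMonoid Q'] [Module R Q']

lemma map₂_flip (d : M →ₗ[R] N →ₗ[R] Q) (e : M' →ₗ[R] N' →ₗ[R] Q')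
    (s : M ⊗[R] M') (t : N ⊗[R] N') :
    TensorProduct.map₂ d.flip e.flip t s = TensorProduct.map₂ d e s t := by
  have h : (TensorProduct.map₂ d.flip e.flip).flip = TensorProduct.map₂ d e := by
    ext
    rfl
  exact LinearMap.congr_fun₂ h s t

lemma map_map₂ {d : M →ₗ[R] M →ₗ[R] M} {e : M' →ₗ[R] M' →ₗ[R] M'} {d' : N →ₗ[R] N →ₗ[R] N}
    {e' : N' →ₗ[R] N' →ₗ[R] N'} {f : M →ₗ[R] N} {g : M' →ₗ[R] N'}
    (hf : ∀ u v, f (d u v) = d' (f u) (f v)) (hg : ∀ u v, g (e u v) = e' (g u) (g v))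
    (s t : M ⊗[R] M') :
    TensorProduct.map f g (TensorProduct.map₂ d e s t) =
      TensorProduct.map₂ d' e' (TensorProduct.map f g s) (TensorProduct.map f g t) := by
  have h : (TensorProduct.map₂ d e).compr₂ (TensorProduct.map f g) =
      (TensorProduct.map₂ d' e').compl₁₂ (TensorProduct.map f g) (TensorProduct.map f g) := by
    ext
    simp [hf, hg]
  exact LinearMap.congr_fun₂ h s t

end TensorProduct

section DivBialg

variable {k : Type*} [Field k] {A B C : Type*} [AddCommGroup A] [Module k A]
  [AddCommGroup B] [Module k B] [AddCommGroup C] [Module k C] [Coalgebra k C]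

namespace DivBialg

/-- The coalgebra underlying a unital bialgebra with divisions, for Mathlib's notion. -/
abbrev coalgebra (S : DivBialg k A) : Coalgebra k A where
  comul := S.Δ
  counit := S.ε
  coassoc := LinearMap.ext S.coassoc
  rTensor_counit_comp_comul := LinearMap.ext fun u ↦
    (TensorProduct.lid k A).injective (by simpa using S.counit_left u)
  lTensor_counit_comp_comul := LinearMap.ext fun u ↦
    (TensorProduct.rid k A).injective (by simpa using S.counit_right u)

lemma isCocomm (S : DivBialg k A) : @IsCocomm k A _ _ _ S.coalgebra :=
  @IsCocomm.mk k A _ _ _ S.coalgebra (LinearMap.ext S.cocomm)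

lemma rd_one (S : DivBialg k A) (u : A) : S.rd u S.one = u := by
  simpa [S.Δ_one, S.ε_one, S.mul_one] using S.rd_mul_cancel S.one u

lemma lift_rd_comul (S : DivBialg k A) (u : A) :
    TensorProduct.lift S.rd (S.Δ u) = S.ε u • S.one := by
  have h : S.mul S.one = LinearMap.id := LinearMap.ext S.one_mul
  simpa [h] using S.rd_mul_cancel u S.one

lemma lift_flip_lTensor_comul (S : DivBialg k A) (d : A →ₗ[k] A →ₗ[k] A) (f : A →ₗ[k] A)
    (u : A) :
    TensorProduct.lift d.flip (f.lTensor A (S.Δ u)) =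
      TensorProduct.lift d (f.rTensor A (S.Δ u)) := by
  let _ := S.coalgebra
  have _ := S.isCocomm
  exact LinearMap.congr_fun (conv_flip d f LinearMap.id) u

/-- The opposite bialgebra: multiplication is reversed and the two divisions are exchanged. -/
def op (S : DivBialg k A) : DivBialg k A where
  Δ := S.Δ
  ε := S.ε
  mul := S.mul.flip
  one := S.one
  ld := S.rd.flip
  rd := S.ld.flip
  coassoc := S.coassoc
  counit_left := S.counit_left
  counit_right := S.counit_right
  cocomm := S.cocomm
  Δ_one := S.Δ_one
  ε_one := S.ε_one
  one_mul := S.mul_one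
  mul_one := S.one_mul
  Δ_mul u v := by rw [map₂_flip, ← S.Δ_mul, LinearMap.flip_apply]
  ε_mul u v := by rw [LinearMap.flip_apply, S.ε_mul, mul_comm]
  Δ_ld u v := by rw [map₂_flip, ← S.Δ_rd, LinearMap.flip_apply]
  ε_ld u v := by rw [LinearMap.flip_apply, S.ε_rd, mul_comm]
  Δ_rd u v := by rw [map₂_flip, ← S.Δ_ld, LinearMap.flip_apply]
  ε_rd u v := by rw [LinearMap.flip_apply, S.ε_ld, mul_comm]
  ld_mul_cancel u v := by
    rw [← S.rd_mul_cancel, S.lift_flip_lTensor_comul]; rfl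
  mul_ld_cancel u v := by
    rw [← S.mul_rd_cancel, S.lift_flip_lTensor_comul]; rfl
  rd_mul_cancel u v := by
    rw [← S.ld_mul_cancel, ← S.lift_flip_lTensor_comul]; rfl
  mul_rd_cancel u v := by
    rw [← S.mul_ld_cancel, ← S.lift_flip_lTensor_comul]; rfl

/-- `f` is a morphism from a coalgebra to the coalgebra underlying `S`. -/
structure IsCoalgHom (S : DivBialg k A) (f : C →ₗ[k] A) : Prop where
  map_Δ : Splits S.Δ f f
  map_ε : ∀ c, S.ε (f c) = counit (R := k) c

variable {S : DivBialg k A} {m : C →ₗ[k] A}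

lemma isCoalgHom_id (S : DivBialg k A) :
    letI := S.coalgebra
    S.IsCoalgHom LinearMap.id := by
  let _ := S.coalgebra
  refine ⟨?_, fun _ ↦ rfl⟩
  rw [Splits, conv_mk, TensorProduct.map_id]
  rfl

lemma IsCoalgHom.comp_divBialgHom {T : DivBialg k B} {φ : A →ₗ[k] B} (hm : S.IsCoalgHom m)
    (hφ : DivBialgHom k S T φ) : T.IsCoalgHom (φ ∘ₗ m) where
  map_Δ := hm.map_Δ.map fun u ↦ (hφ.map_Δ u).symm
  map_ε c := (hφ.map_ε (m c)).trans (hm.map_ε c)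

lemma isCoalgHom_conv [IsCocomm k C] {d : A →ₗ[k] A →ₗ[k] A}
    (hΔ : ∀ u v, S.Δ (d u v) = TensorProduct.map₂ d d (S.Δ u) (S.Δ v))
    (hε : ∀ u v, S.ε (d u v) = S.ε u * S.ε v) {m' : C →ₗ[k] A}
    (hm : S.IsCoalgHom m) (hm' : S.IsCoalgHom m') : S.IsCoalgHom (conv d m m') where
  map_Δ := splits_conv hΔ hm.map_Δ hm'.map_Δ
  map_ε := by
    have h : S.ε ∘ₗ conv d m m' = conv (LinearMap.mul k k) counit counit :=
      comp_conv S.ε fun c c' ↦ by rw [hε, hm.map_ε, hm'.map_ε, LinearMap.mul_apply']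
    exact LinearMap.congr_fun (h.trans (conv_of_counit fun _ _ ↦ mul_comm _ _))

lemma IsCoalgHom.conv_mul_conv_rd (hm : S.IsCoalgHom m) (f : C →ₗ[k] A) :
    conv S.mul (conv S.rd f m) m = f :=
  conv_conv_cancel S.mul_rd_cancel hm.map_Δ (LinearMap.ext hm.map_ε) f

lemma IsCoalgHom.conv_rd_self (hm : S.IsCoalgHom m) :
    conv S.rd m m = counit.smulRight S.one := by
  have h : TensorProduct.lift S.rd ∘ₗ S.Δ ∘ₗ m = conv S.rd m m := by
    rw [hm.map_Δ.comp_eq]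
    exact comp_conv _ fun _ _ ↦ rfl
  ext c
  rw [← h, LinearMap.comp_apply, LinearMap.comp_apply, S.lift_rd_comul, hm.map_ε]
  rfl

end DivBialg

lemma DivBialgHom.comp {E : Type*} [AddCommGroup E] [Module k E] {S : DivBialg k A}
    {T : DivBialg k B} {U : DivBialg k E} {ψ : B →ₗ[k] E} {φ : A →ₗ[k] B}
    (hψ : DivBialgHom k T U ψ) (hφ : DivBialgHom k S T φ) : DivBialgHom k S U (ψ ∘ₗ φ) where
  map_Δ u := by simp [TensorProduct.map_comp, hφ.map_Δ, hψ.map_Δ]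
  map_ε u := by simp [hφ.map_ε, hψ.map_ε]
  map_mul u v := by simp [hφ.map_mul, hψ.map_mul]
  map_one := by simp [hφ.map_one, hψ.map_one]
  map_ld u v := by simp [hφ.map_ld, hψ.map_ld]
  map_rd u v := by simp [hφ.map_rd, hψ.map_rd]

lemma DivBialgHom.op {S : DivBialg k A} {T : DivBialg k B} {φ : A →ₗ[k] B}
    (hφ : DivBialgHom k S T φ) : DivBialgHom k S.op T.op φ where
  map_Δ := hφ.map_Δ
  map_ε := hφ.map_ε
  map_mul u v := hφ.map_mul v u
  map_one := hφ.map_one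
  map_ld u v := hφ.map_rd v u
  map_rd u v := hφ.map_ld v u

end DivBialg

section Subcoalgebra

variable {k : Type*} [Field k] {C M N Q : Type*} [AddCommGroup C] [Module k C] [Coalgebra k C]
  [AddCommGroup M] [Module k M] [AddCommGroup N] [Module k N] [AddCommGroup Q] [Module k Q]
  {Γ : M →ₗ[k] M ⊗[k] M}

lemma isSubcoalg_iff {D : Submodule k M} :
    IsSubcoalg k Γ D ↔ ∀ x ∈ D, Γ x ∈ Submodule.map₂ (TensorProduct.mk k M M) D D := by
  rw [← TensorProduct.range_mapIncl]
  rfl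

lemma Splits.isSubcoalg_range {f : C →ₗ[k] M} (h : Splits Γ f f) :
    IsSubcoalg k Γ (LinearMap.range f) := by
  rw [isSubcoalg_iff]
  rintro - ⟨c, rfl⟩
  rw [← LinearMap.comp_apply, h.comp_eq]
  exact conv_mem (fun c₁ c₂ ↦ Submodule.apply_mem_map₂ _ (LinearMap.mem_range_self f c₁)
    (LinearMap.mem_range_self f c₂)) c

lemma IsSubcoalg.sSup {𝒟 : Set (Submodule k M)} (h𝒟 : ∀ D ∈ 𝒟, IsSubcoalg k Γ D) :
    IsSubcoalg k Γ (sSup 𝒟) := by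
  rw [isSubcoalg_iff]
  refine sSup_le (a := (Submodule.map₂ (TensorProduct.mk k M M) _ _).comap Γ) fun D hD x hx ↦ ?_
  exact Submodule.map₂_le_map₂ (le_sSup hD) (le_sSup hD) (isSubcoalg_iff.mp (h𝒟 D hD) x hx)

lemma map₂_mem_map₂_mk {d : M →ₗ[k] N →ₗ[k] Q} {D : Submodule k M} {E : Submodule k N}
    {s : M ⊗[k] M} (hs : s ∈ Submodule.map₂ (TensorProduct.mk k M M) D D) {t : N ⊗[k] N}
    (ht : t ∈ Submodule.map₂ (TensorProduct.mk k N N) E E) :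
    TensorProduct.map₂ d d s t ∈
      Submodule.map₂ (TensorProduct.mk k Q Q) (Submodule.map₂ d D E) (Submodule.map₂ d D E) := by
  set P := Submodule.map₂ (TensorProduct.mk k Q Q) (Submodule.map₂ d D E) (Submodule.map₂ d D E)
  have h_right {x y : M} (hx : x ∈ D) (hy : y ∈ D) : Submodule.map₂ (TensorProduct.mk k N N) E E ≤
      P.comap (TensorProduct.map₂ d d (x ⊗ₜ y)) := by
    refine Submodule.map₂_le.mpr fun v hv w hw ↦ ?_
    rw [Submodule.mem_comap, TensorProduct.mk_apply, TensorProduct.map₂_apply_tmul,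
      TensorProduct.map_tmul]
    exact Submodule.apply_mem_map₂ _ (Submodule.apply_mem_map₂ d hx hv)
      (Submodule.apply_mem_map₂ d hy hw)
  have h_left : Submodule.map₂ (TensorProduct.mk k M M) D D ≤
      P.comap ((TensorProduct.map₂ d d).flip t) :=
    Submodule.map₂_le.mpr fun x hx y hy ↦ h_right hx hy ht
  exact h_left hs

lemma IsSubcoalg.map₂ {ΓN : N →ₗ[k] N ⊗[k] N} {ΓQ : Q →ₗ[k] Q ⊗[k] Q} {d : M →ₗ[k] N →ₗ[k] Q}
    (hd : ∀ u v, ΓQ (d u v) = TensorProduct.map₂ d d (Γ u) (ΓN v))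
    {D : Submodule k M} {E : Submodule k N} (hD : IsSubcoalg k Γ D) (hE : IsSubcoalg k ΓN E) :
    IsSubcoalg k ΓQ (Submodule.map₂ d D E) := by
  rw [isSubcoalg_iff] at hD hE ⊢
  have h : Submodule.map₂ d D E ≤ (Submodule.map₂ (TensorProduct.mk k Q Q)
      (Submodule.map₂ d D E) (Submodule.map₂ d D E)).comap ΓQ := by
    refine Submodule.map₂_le.mpr fun u hu v hv ↦ ?_
    rw [Submodule.mem_comap, hd]
    exact map₂_mem_map₂_mk (hD u hu) (hE v hv)
  exact h

end Subcoalgebra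

section Pullback

variable {k : Type*} [Field k] {A B C : Type*} [AddCommGroup A] [Module k A]
  [AddCommGroup B] [Module k B] [AddCommGroup C] [Module k C] [Coalgebra k C]
  {SA : DivBialg k A} {SB : DivBialg k B} {π : A →ₗ[k] B}

lemma tcomul_map₂_mul (S : DivBialg k A) (s t : A ⊗[k] A) :
    tcomul k S (TensorProduct.map₂ S.mul S.mul s t) =
      TensorProduct.map₂ (TensorProduct.map₂ S.mul S.mul) (TensorProduct.map₂ S.mul S.mul)
        (tcomul k S s) (tcomul k S t) := by
  have h : (TensorProduct.map₂ (TensorProduct.map₂ S.mul S.mul)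
      (TensorProduct.map₂ S.mul S.mul)).compr₂
        (TensorProduct.tensorTensorTensorComm k A A A A).toLinearMap =
      (TensorProduct.map₂ (TensorProduct.map₂ S.mul S.mul)
        (TensorProduct.map₂ S.mul S.mul)).compl₁₂
          (TensorProduct.tensorTensorTensorComm k A A A A).toLinearMap
          (TensorProduct.tensorTensorTensorComm k A A A A).toLinearMap := by
    ext
    simp
  rw [tcomul, LinearMap.comp_apply, map_map₂ S.Δ_mul S.Δ_mul]
  exact LinearMap.congr_fun₂ h _ _

lemma tcomul_tmul (S : DivBialg k A) (u v : A) :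
    tcomul k S (u ⊗ₜ v) = TensorProduct.map₂ (TensorProduct.mk k A A) (TensorProduct.mk k A A)
      (S.Δ u) (S.Δ v) := by
  have h : (TensorProduct.mk k (A ⊗[k] A) (A ⊗[k] A)).compr₂
      (TensorProduct.tensorTensorTensorComm k A A A A).toLinearMap =
      TensorProduct.map₂ (TensorProduct.mk k A A) (TensorProduct.mk k A A) := by
    ext
    simp
  exact LinearMap.congr_fun₂ h _ _

lemma pbFst_tmul (u v : A) : pbFst k SA π (u ⊗ₜ v) = SA.ε v • π u := by
  simp [pbFst]

lemma pbSnd_tmul (u v : A) : pbSnd k SA π (u ⊗ₜ v) = SA.ε u • π v := by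
  simp [pbSnd]

lemma pbFst_map₂_mul (hπ : DivBialgHom k SA SB π) (s t : A ⊗[k] A) :
    pbFst k SA π (TensorProduct.map₂ SA.mul SA.mul s t) =
      SB.mul (pbFst k SA π s) (pbFst k SA π t) := by
  have h : (TensorProduct.map₂ SA.mul SA.mul).compr₂ (pbFst k SA π) =
      SB.mul.compl₁₂ (pbFst k SA π) (pbFst k SA π) := by
    ext u u' v v'
    simp [pbFst_tmul, SA.ε_mul, hπ.map_mul, smul_smul, mul_comm]
  exact LinearMap.congr_fun₂ h s t

lemma pbSnd_map₂_mul (hπ : DivBialgHom k SA SB π) (s t : A ⊗[k] A) :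
    pbSnd k SA π (TensorProduct.map₂ SA.mul SA.mul s t) =
      SB.mul (pbSnd k SA π s) (pbSnd k SA π t) := by
  have h : (TensorProduct.map₂ SA.mul SA.mul).compr₂ (pbSnd k SA π) =
      SB.mul.compl₁₂ (pbSnd k SA π) (pbSnd k SA π) := by
    ext u u' v v'
    simp [pbSnd_tmul, SA.ε_mul, hπ.map_mul, smul_smul, mul_comm]
  exact LinearMap.congr_fun₂ h s t

lemma isSubcoalg_pbSub (SA : DivBialg k A) (π : A →ₗ[k] B) :
    IsSubcoalg k (tcomul k SA) (pbSub k SA π) :=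
  IsSubcoalg.sSup fun _ hD ↦ hD.1

lemma le_pbSub {D : Submodule k (A ⊗[k] A)} (hD : IsSubcoalg k (tcomul k SA) D)
    (h : ∀ t ∈ D, pbFst k SA π t = pbSnd k SA π t) : D ≤ pbSub k SA π :=
  le_sSup ⟨hD, h⟩

lemma pbFst_eq_pbSnd {t : A ⊗[k] A} (ht : t ∈ pbSub k SA π) : pbFst k SA π t = pbSnd k SA π t :=
  sSup_le (a := LinearMap.eqLocus (pbFst k SA π) (pbSnd k SA π)) (fun _ hD ↦ hD.2) ht

lemma map₂_mul_mem_pbSub (hπ : DivBialgHom k SA SB π) {s t : A ⊗[k] A} (hs : s ∈ pbSub k SA π)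
    (ht : t ∈ pbSub k SA π) : TensorProduct.map₂ SA.mul SA.mul s t ∈ pbSub k SA π := by
  have h : IsSubcoalg k (tcomul k SA) (Submodule.map₂ (TensorProduct.map₂ SA.mul SA.mul)
      (pbSub k SA π) (pbSub k SA π)) :=
    (isSubcoalg_pbSub SA π).map₂ (tcomul_map₂_mul SA) (isSubcoalg_pbSub SA π)
  have h_eq : Submodule.map₂ (TensorProduct.map₂ SA.mul SA.mul) (pbSub k SA π) (pbSub k SA π) ≤
      LinearMap.eqLocus (pbFst k SA π) (pbSnd k SA π) := by
    refine Submodule.map₂_le.mpr fun u hu v hv ↦ ?_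
    rw [LinearMap.mem_eqLocus, pbFst_map₂_mul hπ, pbSnd_map₂_mul hπ, pbFst_eq_pbSnd hu,
      pbFst_eq_pbSnd hv]
  exact le_pbSub h h_eq (Submodule.apply_mem_map₂ _ hs ht)

lemma conv_mk_mem_pbSub [IsCocomm k C] {f g : C →ₗ[k] A} (hf : SA.IsCoalgHom f)
    (hg : SA.IsCoalgHom g) (hfg : π ∘ₗ f = π ∘ₗ g) (c : C) :
    conv (TensorProduct.mk k A A) f g c ∈ pbSub k SA π := by
  have hFst : pbFst k SA π ∘ₗ conv (TensorProduct.mk k A A) f g = π ∘ₗ f := by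
    rw [comp_conv (d' := (LinearMap.lsmul k B).flip) (f' := π ∘ₗ f) (g' := counit)]
    · exact conv_of_counit fun _ _ ↦ rfl
    · intro c c'
      simp [pbFst_tmul, hg.map_ε]
  have hSnd : pbSnd k SA π ∘ₗ conv (TensorProduct.mk k A A) f g = π ∘ₗ g := by
    rw [comp_conv (d' := LinearMap.lsmul k B) (f' := counit) (g' := π ∘ₗ g),
      ← conv_flip]
    · exact conv_of_counit fun _ _ ↦ rfl
    · intro c c'
      simp [pbSnd_tmul, hf.map_ε]
  have h : IsSubcoalg k (tcomul k SA)
      (LinearMap.range (conv (TensorProduct.mk k A A) f g)) :=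
    (splits_conv (tcomul_tmul SA) hf.map_Δ hg.map_Δ).isSubcoalg_range
  have h_eq : ∀ t ∈ LinearMap.range (conv (TensorProduct.mk k A A) f g),
      pbFst k SA π t = pbSnd k SA π t := by
    rintro - ⟨c', rfl⟩
    rw [← LinearMap.comp_apply, hFst, hfg, ← hSnd, LinearMap.comp_apply]
  exact le_pbSub h h_eq (LinearMap.mem_range_self _ c)

end Pullback

section SplitEpi

variable {k : Type*} [Field k] {A B C : Type*} [AddCommGroup A] [Module k A]
  [AddCommGroup B] [Module k B] [AddCommGroup C] [Module k C] [Coalgebra k C]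
  {SA : DivBialg k A} {SB : DivBialg k B} {π : A →ₗ[k] B} {z : B →ₗ[k] A}

/-- `π : A → B` is a split epimorphism of unital bialgebras with divisions, with section `z`. -/
structure IsSplitEpi (SA : DivBialg k A) (SB : DivBialg k B) (π : A →ₗ[k] B) (z : B →ₗ[k] A) :
    Prop where
  hom : DivBialgHom k SA SB π
  hom_section : DivBialgHom k SB SA z
  comp_section : π ∘ₗ z = LinearMap.id

namespace IsSplitEpi

lemma apply_section (h : IsSplitEpi SA SB π z) (b : B) : π (z b) = b :=
  LinearMap.congr_fun h.comp_section b

lemma hom_comp (h : IsSplitEpi SA SB π z) : DivBialgHom k SA SA (z ∘ₗ π) :=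
  h.hom_section.comp h.hom

lemma op (h : IsSplitEpi SA SB π z) : IsSplitEpi SA.op SB.op π z :=
  ⟨h.hom.op, h.hom_section.op, h.comp_section⟩

end IsSplitEpi

section Coaction

/-- The coaction `u ↦ Σ u₍₁₎ ⊗ π(u₍₂₎)` of `B` on `A`, with `B` embedded in `A` through `z`. -/
noncomputable def coact (S : DivBialg k A) (π : A →ₗ[k] B) (z : B →ₗ[k] A) : A →ₗ[k] A ⊗[k] A :=
  (z ∘ₗ π).lTensor A ∘ₗ S.Δ

lemma coact_apply (S : DivBialg k A) (π : A →ₗ[k] B) (z : B →ₗ[k] A) (u : A) :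
    coact S π z u = TensorProduct.map LinearMap.id (z ∘ₗ π) (S.Δ u) := rfl

lemma coact_map₂ {d : A →ₗ[k] A →ₗ[k] A}
    (hΔ : ∀ u v, SA.Δ (d u v) = TensorProduct.map₂ d d (SA.Δ u) (SA.Δ v))
    (hd : ∀ u v, (z ∘ₗ π) (d u v) = d ((z ∘ₗ π) u) ((z ∘ₗ π) v)) (u v : A) :
    coact SA π z (d u v) = TensorProduct.map₂ d d (coact SA π z u) (coact SA π z v) := by
  simp only [coact_apply, hΔ, map_map₂ (f := LinearMap.id) (fun _ _ ↦ rfl) hd]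

lemma comm_coact (S : DivBialg k A) (π : A →ₗ[k] B) (z : B →ₗ[k] A) (u : A) :
    TensorProduct.comm k A A (coact S π z u) = (z ∘ₗ π).rTensor A (S.Δ u) := by
  rw [coact_apply, ← TensorProduct.map_comm, S.cocomm]
  rfl

lemma rTensor_comul_comp [IsCocomm k C] {f f' : C →ₗ[k] A} (hf : Splits (coact SA π z) f f') :
    ((z ∘ₗ π).rTensor A ∘ₗ SA.Δ) ∘ₗ f = conv (TensorProduct.mk k A A) f' f := by
  have h_comm : (z ∘ₗ π).rTensor A ∘ₗ SA.Δ =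
      (TensorProduct.comm k A A).toLinearMap ∘ₗ coact SA π z :=
    LinearMap.ext fun u ↦ (comm_coact SA π z u).symm
  rw [h_comm, LinearMap.comp_assoc, hf.comp_eq, ← conv_flip (TensorProduct.mk k A A)]
  exact comp_conv _ fun _ _ ↦ rfl

lemma IsSplitEpi.splits_coact_section_comp (h : IsSplitEpi SA SB π z) {n : C →ₗ[k] B}
    (hn : SB.IsCoalgHom n) : Splits (coact SA π z) (z ∘ₗ n) (z ∘ₗ n) := by
  refine Splits.map (fun b ↦ ?_) hn.map_Δ
  have hπz : (z ∘ₗ π) ∘ₗ z = z := LinearMap.ext fun b ↦ congrArg z (h.apply_section b)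
  rw [coact_apply, ← h.hom_section.map_Δ, ← LinearMap.comp_apply, ← TensorProduct.map_comp, hπz,
    LinearMap.id_comp]

end Coaction

section Fsub

lemma le_fsub {oneB : B} {D : Submodule k A} (hD : IsSubcoalg k SA.Δ D)
    (hπ : ∀ x ∈ D, π x = SA.ε x • oneB) : D ≤ Fsub k SA oneB π :=
  le_sSup ⟨hD, hπ⟩

lemma coact_of_mem_fsub (hz : DivBialgHom k SB SA z) {x : A} (hx : x ∈ Fsub k SA SB.one π) :
    coact SA π z x = x ⊗ₜ SA.one := by
  refine sSup_le (a := LinearMap.eqLocus (coact SA π z)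
    ((TensorProduct.mk k A A).flip SA.one)) (fun D hD y hy ↦ ?_) hx
  obtain ⟨t, ht⟩ := hD.1 y hy
  have h_eq : (z ∘ₗ π).lTensor A ∘ₗ TensorProduct.map D.subtype D.subtype =
      (TensorProduct.mk k A A).flip SA.one ∘ₗ (TensorProduct.rid k A).toLinearMap ∘ₗ
        SA.ε.lTensor A ∘ₗ TensorProduct.map D.subtype D.subtype := by
    ext v w
    simp [hD.2 w w.2, hz.map_one, TensorProduct.smul_tmul']
  have h := LinearMap.congr_fun h_eq t
  simp only [LinearMap.comp_apply, ht, LinearEquiv.coe_coe, SA.counit_right] at h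
  exact h

lemma rTensor_comul_of_mem_fsub (hz : DivBialgHom k SB SA z) {x : A}
    (hx : x ∈ Fsub k SA SB.one π) : (z ∘ₗ π).rTensor A (SA.Δ x) = SA.one ⊗ₜ x := by
  rw [← comm_coact, coact_of_mem_fsub hz hx, TensorProduct.comm_tmul]

namespace IsSplitEpi

lemma lift_rd_coact_mem_fsub (h : IsSplitEpi SA SB π z) (u : A) :
    TensorProduct.lift SA.rd (coact SA π z u) ∈ Fsub k SA SB.one π := by
  let _ := SA.coalgebra
  have _ := SA.isCocomm
  have hid := DivBialg.isCoalgHom_id SA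
  have hp : SA.IsCoalgHom (conv SA.rd LinearMap.id (z ∘ₗ π)) :=
    DivBialg.isCoalgHom_conv SA.Δ_rd SA.ε_rd hid (hid.comp_divBialgHom h.hom_comp)
  have hπp : π ∘ₗ conv SA.rd LinearMap.id (z ∘ₗ π) = counit.smulRight SB.one := by
    rw [← (hid.comp_divBialgHom h.hom).conv_rd_self]
    refine comp_conv π fun v w ↦ ?_
    rw [h.hom.map_rd]
    exact congrArg (SB.rd (π v)) (h.apply_section (π w))
  refine le_fsub hp.map_Δ.isSubcoalg_range ?_ (LinearMap.mem_range_self _ u)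
  rintro - ⟨v, rfl⟩
  rw [hp.map_ε]
  exact LinearMap.congr_fun hπp v

-- If `x` is coinvariant, the projection `u ↦ Σ u₍₁₎/0(π(u₍₂₎))` onto `F(A)` fixes it.
lemma mem_fsub_iff (h : IsSplitEpi SA SB π z) {x : A} :
    x ∈ Fsub k SA SB.one π ↔ coact SA π z x = x ⊗ₜ SA.one := by
  refine ⟨coact_of_mem_fsub h.hom_section, fun hx ↦ ?_⟩
  have h_mem := h.lift_rd_coact_mem_fsub x
  rwa [hx, TensorProduct.lift.tmul, SA.rd_one] at h_mem

lemma splits_coact_mul_comp (h : IsSplitEpi SA SB π z) {x : A} (hx : x ∈ Fsub k SA SB.one π)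
    {f f' : C →ₗ[k] A} (hf : Splits (coact SA π z) f f') :
    Splits (coact SA π z) (SA.mul x ∘ₗ f) f' := by
  have h_one : SA.mul SA.one = LinearMap.id := LinearMap.ext SA.one_mul
  have h_mul (u : A) : coact SA π z (SA.mul x u) =
      TensorProduct.map (SA.mul x) (SA.mul SA.one) (coact SA π z u) := by
    rw [coact_map₂ SA.Δ_mul h.hom_comp.map_mul, coact_of_mem_fsub h.hom_section hx,
      TensorProduct.map₂_apply_tmul]
  have h_splits := hf.map h_mul
  rwa [h_one, LinearMap.id_comp] at h_splits

lemma conv_rd_mem_fsub [IsCocomm k C] (h : IsSplitEpi SA SB π z) {n : C →ₗ[k] B}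
    (hn : SB.IsCoalgHom n) {f : C →ₗ[k] A} (hf : Splits (coact SA π z) f (z ∘ₗ n)) (c : C) :
    conv SA.rd f (z ∘ₗ n) c ∈ Fsub k SA SB.one π := by
  rw [h.mem_fsub_iff]
  have h_splits := splits_conv (coact_map₂ SA.Δ_rd h.hom_comp.map_rd) hf
    (h.splits_coact_section_comp hn)
  rw [(hn.comp_divBialgHom h.hom_section).conv_rd_self] at h_splits
  have h_conv : conv (TensorProduct.mk k A A) (conv SA.rd f (z ∘ₗ n))
      (counit.smulRight SA.one) =
        (TensorProduct.mk k A A).flip SA.one ∘ₗ conv SA.rd f (z ∘ₗ n) :=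
    conv_of_counit fun _ _ ↦ by simp
  exact LinearMap.congr_fun (h_splits.comp_eq.trans h_conv) c

lemma lTensor_comul_mem_pbSub (h : IsSplitEpi SA SB π z) (u : A) :
    (z ∘ₗ π).lTensor A (SA.Δ u) ∈ pbSub k SA π := by
  let _ := SA.coalgebra
  have _ := SA.isCocomm
  have hid := DivBialg.isCoalgHom_id SA
  have h_mem := conv_mk_mem_pbSub (π := π) hid (hid.comp_divBialgHom h.hom_comp)
    (LinearMap.ext fun v ↦ (h.apply_section (π v)).symm) u
  rwa [conv_mk] at h_mem

lemma rTensor_comul_mem_pbSub (h : IsSplitEpi SA SB π z) (u : A) :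
    (z ∘ₗ π).rTensor A (SA.Δ u) ∈ pbSub k SA π := by
  let _ := SA.coalgebra
  have _ := SA.isCocomm
  have hid := DivBialg.isCoalgHom_id SA
  have h_mem := conv_mk_mem_pbSub (π := π) (hid.comp_divBialgHom h.hom_comp) hid
    (LinearMap.ext fun v ↦ h.apply_section (π v)) u
  rwa [conv_mk] at h_mem

end IsSplitEpi

lemma tmul_eq_map₂_mul (S : DivBialg k A) (x y : A) :
    x ⊗ₜ[k] y = TensorProduct.map₂ S.mul S.mul (x ⊗ₜ S.one) (S.one ⊗ₜ y) := by
  simp [S.mul_one, S.one_mul]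

lemma IsSplitEpi.tmul_mem_pbSub (h : IsSplitEpi SA SB π z) {x y : A}
    (hx : x ∈ Fsub k SA SB.one π) (hy : y ∈ Fsub k SA SB.one π) : x ⊗ₜ y ∈ pbSub k SA π := by
  rw [tmul_eq_map₂_mul SA, ← coact_of_mem_fsub h.hom_section hx,
    ← rTensor_comul_of_mem_fsub h.hom_section hy]
  exact map₂_mul_mem_pbSub h.hom (h.lTensor_comul_mem_pbSub x) (h.rTensor_comul_mem_pbSub y)

end Fsub

section BoxPlus

/-- The properties of `⊞`, linearly extended to `A ⊗ A`, on which the product formula rests: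
it is multiplicative on `A ⊗_B A` and has the unit `z`. -/
structure IsBoxPlus (S : DivBialg k A) (π : A →ₗ[k] B) (z : B →ₗ[k] A)
    (β : A ⊗[k] A →ₗ[k] A) : Prop where
  map_mul : ∀ s ∈ pbSub k S π, ∀ t ∈ pbSub k S π,
    β (TensorProduct.map₂ S.mul S.mul s t) = S.mul (β s) (β t)
  unit_right : ∀ u, β ((z ∘ₗ π).lTensor A (S.Δ u)) = u
  unit_left : ∀ u, β ((z ∘ₗ π).rTensor A (S.Δ u)) = u

lemma BoxPlusData.exists_isBoxPlus (h : IsSplitEpi SA SB π z) (P : BoxPlusData k SA SB π z) :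
    ∃ β, IsBoxPlus SA π z β := by
  obtain ⟨β, hβ⟩ := LinearMap.exists_extend P.bp
  have hβ_apply {t : A ⊗[k] A} (ht : t ∈ pbSub k SA π) : β t = P.bp ⟨t, ht⟩ :=
    LinearMap.congr_fun hβ ⟨t, ht⟩
  refine ⟨β, fun s hs t ht ↦ ?_, fun u ↦ ?_, fun u ↦ ?_⟩
  · rw [hβ_apply hs, hβ_apply ht, hβ_apply (map₂_mul_mem_pbSub h.hom hs ht)]
    exact P.bp_mul ⟨s, hs⟩ ⟨t, ht⟩ _
  · exact (hβ_apply (h.lTensor_comul_mem_pbSub u)).trans (P.bp_unit_right u _)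
  · exact (hβ_apply (h.rTensor_comul_mem_pbSub u)).trans (P.bp_unit_left u _)

namespace IsBoxPlus

variable {β : A ⊗[k] A →ₗ[k] A}

lemma op (hβ : IsBoxPlus SA π z β) : IsBoxPlus SA.op π z β where
  map_mul s hs t ht := (congrArg β (map₂_flip SA.mul SA.mul t s)).trans (hβ.map_mul t ht s hs)
  unit_right := hβ.unit_right
  unit_left := hβ.unit_left

lemma map_comul_mul_comul (h : IsSplitEpi SA SB π z) (hβ : IsBoxPlus SA π z β) (u v : A) :
    β (TensorProduct.map₂ SA.mul SA.mul ((z ∘ₗ π).lTensor A (SA.Δ u))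
      ((z ∘ₗ π).rTensor A (SA.Δ v))) = SA.mul u v := by
  rw [hβ.map_mul _ (h.lTensor_comul_mem_pbSub u) _ (h.rTensor_comul_mem_pbSub v),
    hβ.unit_right, hβ.unit_left]

lemma map_tmul (h : IsSplitEpi SA SB π z) (hβ : IsBoxPlus SA π z β) {x y : A}
    (hx : x ∈ Fsub k SA SB.one π) (hy : y ∈ Fsub k SA SB.one π) : β (x ⊗ₜ y) = SA.mul x y := by
  rw [← hβ.map_comul_mul_comul h, tmul_eq_map₂_mul SA, ← coact_of_mem_fsub h.hom_section hx,
    ← rTensor_comul_of_mem_fsub h.hom_section hy]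
  rfl

variable [IsCocomm k C] {f f' m m' R T : C →ₗ[k] A} {n n' : C →ₗ[k] B}

lemma conv_mul_eq_comp_conv (h : IsSplitEpi SA SB π z) (hβ : IsBoxPlus SA π z β)
    (hf : Splits (coact SA π z) f m) (hf' : Splits (coact SA π z) f' m') :
    conv SA.mul f f' =
      β ∘ₗ conv (TensorProduct.mk k A A) (conv SA.mul f m') (conv SA.mul m f') := by
  rw [← conv_map₂_conv, ← hf.comp_eq, ← rTensor_comul_comp hf']
  exact (comp_conv β fun c c' ↦ hβ.map_comul_mul_comul h (f c) (f' c')).symm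

lemma comp_conv_conv_mul_right (h : IsSplitEpi SA SB π z) (hβ : IsBoxPlus SA π z β)
    (hR : ∀ c, R c ∈ Fsub k SA SB.one π) (hT : ∀ c, T c ∈ Fsub k SA SB.one π)
    (hm : Splits (coact SA π z) m m) :
    β ∘ₗ conv (TensorProduct.mk k A A) (conv SA.mul R m) (conv SA.mul T m) =
      conv SA.mul (conv SA.mul R T) m := by
  have hRT : β ∘ₗ conv (TensorProduct.mk k A A) R T = conv SA.mul R T :=
    comp_conv β fun c c' ↦ hβ.map_tmul h (hR c) (hT c')
  rw [← conv_map₂_conv, ← hm.comp_eq, ← hRT]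
  refine comp_conv β fun c c' ↦ ?_
  have h_mem : conv (TensorProduct.mk k A A) R T c ∈ pbSub k SA π :=
    conv_mem (fun c c' ↦ h.tmul_mem_pbSub (hR c) (hT c')) c
  exact (hβ.map_mul _ h_mem _ (h.lTensor_comul_mem_pbSub (m c'))).trans
    (congrArg (SA.mul _) (hβ.unit_right (m c')))

theorem conv_mul_eq_conv_rd (h : IsSplitEpi SA SB π z) (hβ : IsBoxPlus SA π z β)
    (hn : SB.IsCoalgHom n) (hn' : SB.IsCoalgHom n')
    (hf : Splits (coact SA π z) f (z ∘ₗ n)) (hf' : Splits (coact SA π z) f' (z ∘ₗ n')) :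
    conv SA.mul f f' = conv SA.mul
      (conv SA.mul (conv SA.rd (conv SA.mul f (z ∘ₗ n')) (z ∘ₗ conv SB.mul n n'))
        (conv SA.rd (conv SA.mul (z ∘ₗ n) f') (z ∘ₗ conv SB.mul n n')))
      (z ∘ₗ conv SB.mul n n') := by
  have hN : SB.IsCoalgHom (conv SB.mul n n') :=
    DivBialg.isCoalgHom_conv SB.Δ_mul SB.ε_mul hn hn'
  have hzN : z ∘ₗ conv SB.mul n n' = conv SA.mul (z ∘ₗ n) (z ∘ₗ n') :=
    comp_conv z fun _ _ ↦ h.hom_section.map_mul _ _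
  have h_coact := coact_map₂ SA.Δ_mul h.hom_comp.map_mul
  have hfn' := splits_conv h_coact hf (h.splits_coact_section_comp hn')
  have hnf' := splits_conv h_coact (h.splits_coact_section_comp hn) hf'
  rw [← hzN] at hfn' hnf'
  have hzN_hom := hN.comp_divBialgHom h.hom_section
  rw [← hβ.comp_conv_conv_mul_right h (h.conv_rd_mem_fsub hN hfn') (h.conv_rd_mem_fsub hN hnf')
      (h.splits_coact_section_comp hN),
    hzN_hom.conv_mul_conv_rd, hzN_hom.conv_mul_conv_rd, ← hβ.conv_mul_eq_comp_conv h hf hf']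

theorem conv_mul_eq_conv_ld (h : IsSplitEpi SA SB π z) (hβ : IsBoxPlus SA π z β)
    (hn : SB.IsCoalgHom n) (hn' : SB.IsCoalgHom n')
    (hf : Splits (coact SA π z) f (z ∘ₗ n)) (hf' : Splits (coact SA π z) f' (z ∘ₗ n')) :
    conv SA.mul f f' = conv SA.mul (z ∘ₗ conv SB.mul n n')
      (conv SA.mul (conv SA.ld (z ∘ₗ conv SB.mul n n') (conv SA.mul f (z ∘ₗ n')))
        (conv SA.ld (z ∘ₗ conv SB.mul n n') (conv SA.mul (z ∘ₗ n) f'))) := by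
  have h_op := hβ.op.conv_mul_eq_conv_rd h.op ⟨hn'.1, hn'.2⟩ ⟨hn.1, hn.2⟩ hf' hf
  simpa only [DivBialg.op, conv_flip] using h_op

end IsBoxPlus

end BoxPlus

end SplitEpi

section TensorCoalgebra

variable {R : Type*} [CommSemiring R] {C D M M' N P Q : Type*}
  [AddCommMonoid C] [Module R C] [Coalgebra R C] [AddCommMonoid D] [Module R D] [Coalgebra R D]
  [AddCommMonoid M] [Module R M] [AddCommMonoid M'] [Module R M']
  [AddCommMonoid N] [Module R N] [AddCommMonoid P] [Module R P] [AddCommMonoid Q] [Module R Q]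

variable (R C D) in
/-- The projection `c ⊗ d ↦ ε(d) c` of a tensor product of coalgebras. -/
noncomputable def tensorFst : C ⊗[R] D →ₗc[R] C :=
  (Coalgebra.TensorProduct.rid R R C).toCoalgHom.comp
    (Coalgebra.TensorProduct.map (CoalgHom.id R C) (counitCoalgHom R D))

variable (R C D) in
/-- The projection `c ⊗ d ↦ ε(c) d` of a tensor product of coalgebras. -/
noncomputable def tensorSnd : C ⊗[R] D →ₗc[R] D :=
  (Coalgebra.TensorProduct.lid R D).toCoalgHom.comp
    (Coalgebra.TensorProduct.map (counitCoalgHom R C) (CoalgHom.id R D))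

lemma map_tensorFst_tensorSnd_comp_comul :
    TensorProduct.map (tensorFst R C D).toLinearMap (tensorSnd R C D).toLinearMap ∘ₗ comul =
      LinearMap.id := by
  have h : TensorProduct.map (tensorFst R C D).toLinearMap (tensorSnd R C D).toLinearMap ∘ₗ
      (TensorProduct.tensorTensorTensorComm R C C D D).toLinearMap =
      TensorProduct.map ((TensorProduct.rid R C).toLinearMap ∘ₗ counit.lTensor C)
        ((TensorProduct.lid R D).toLinearMap ∘ₗ counit.rTensor D) := by
    ext
    simpa [tensorFst, tensorSnd, TensorProduct.smul_tmul] using smul_comm _ _ _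
  ext c d
  refine (LinearMap.congr_fun h (comul c ⊗ₜ comul d)).trans ?_
  simp

lemma conv_comp_tensorFst_comp_tensorSnd (d : M →ₗ[R] N →ₗ[R] Q) (f : C →ₗ[R] M)
    (g : D →ₗ[R] N) :
    conv d (f ∘ₗ (tensorFst R C D).toLinearMap) (g ∘ₗ (tensorSnd R C D).toLinearMap) =
      TensorProduct.lift (d.compl₁₂ f g) := by
  rw [conv, TensorProduct.map_comp, LinearMap.comp_assoc, map_tensorFst_tensorSnd_comp_comul]
  ext
  rfl

lemma conv_conv_right_apply (d : M →ₗ[R] Q →ₗ[R] P) (e : M' →ₗ[R] N →ₗ[R] Q) (f : C →ₗ[R] M)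
    (g : C →ₗ[R] M') (m : C →ₗ[R] N) (c : C) :
    conv d f (conv e g m) c = TensorProduct.lift d ((TensorProduct.lift e).lTensor M
      (TensorProduct.map f (TensorProduct.map g m) (comul.lTensor C (comul c)))) := by
  have h : TensorProduct.map f (conv e g m) = (TensorProduct.lift e).lTensor M ∘ₗ
      TensorProduct.map f (TensorProduct.map g m) ∘ₗ comul.lTensor C := by
    ext
    rfl
  rw [conv_apply, h]
  rfl

lemma conv_conv_left_apply (d : Q →ₗ[R] N →ₗ[R] P) (e : M →ₗ[R] M' →ₗ[R] Q) (f : C →ₗ[R] M)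
    (g : C →ₗ[R] M') (m : C →ₗ[R] N) (c : C) :
    conv d (conv e f g) m c = TensorProduct.lift d ((TensorProduct.lift e).rTensor N
      ((TensorProduct.assoc R M M' N).symm (TensorProduct.map f (TensorProduct.map g m)
        (comul.lTensor C (comul c))))) := by
  have h : TensorProduct.map (conv e f g) m = (TensorProduct.lift e).rTensor N ∘ₗ
      TensorProduct.map (TensorProduct.map f g) m ∘ₗ comul.rTensor C := by
    ext
    rfl
  rw [← TensorProduct.map_map_assoc_symm, coassoc_symm_apply, conv_apply, h]
  rfl

end TensorCoalgebra

section SweedlerOperators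

variable {k : Type*} [Field k] {A B : Type*} [AddCommGroup A] [Module k A]
  [AddCommGroup B] [Module k B] [Coalgebra k B]

lemma lTensor_tensorTensorTensorComm_comul2_tmul (b b' : B) :
    (TensorProduct.tensorTensorTensorComm k B B B B).toLinearMap.lTensor (B ⊗[k] B)
        (TensorProduct.tensorTensorTensorComm k B (B ⊗[k] B) B (B ⊗[k] B)
          (comul2 k comul b ⊗ₜ comul2 k comul b')) =
      comul.lTensor (B ⊗[k] B) (comul (b ⊗ₜ b')) := by
  have h : (TensorProduct.tensorTensorTensorComm k B B B B).toLinearMap.lTensor (B ⊗[k] B) ∘ₗ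
        (TensorProduct.tensorTensorTensorComm k B (B ⊗[k] B) B (B ⊗[k] B)).toLinearMap ∘ₗ
          TensorProduct.map (comul.lTensor B) (comul.lTensor B) =
      comul.lTensor (B ⊗[k] B) ∘ₗ
        (TensorProduct.tensorTensorTensorComm k B B B B).toLinearMap := by
    ext
    rfl
  exact LinearMap.congr_fun h (comul b ⊗ₜ comul b')

lemma hatOf_sweedCoreL (d : A →ₗ[k] A →ₗ[k] A) (α : B →ₗ[k] B →ₗ[k] A)
    (γ : B →ₗ[k] B →ₗ[k] A →ₗ[k] A) (x : A) :
    hatOf k (sweedCoreL k d α γ) comul x =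
      conv d (TensorProduct.lift α) (TensorProduct.lift (γ.compr₂ (LinearMap.applyₗ x))) := by
  have h : sweedCoreL k d α γ ∘ₗ
        (TensorProduct.mk k ((B ⊗[k] B) ⊗[k] (B ⊗[k] B)) A).flip x =
      TensorProduct.lift d ∘ₗ TensorProduct.map (TensorProduct.lift α)
          (TensorProduct.lift (γ.compr₂ (LinearMap.applyₗ x))) ∘ₗ
        (TensorProduct.tensorTensorTensorComm k B B B B).toLinearMap := by
    ext
    rfl
  exact congrArg (· ∘ₗ TensorProduct.map comul comul) h

lemma hatOf_sweedCoreR (d : A →ₗ[k] A →ₗ[k] A) (α : B →ₗ[k] B →ₗ[k] A)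
    (γ : B →ₗ[k] B →ₗ[k] A →ₗ[k] A) (x : A) :
    hatOf k (sweedCoreR k d α γ) comul x =
      conv d (TensorProduct.lift (γ.compr₂ (LinearMap.applyₗ x))) (TensorProduct.lift α) := by
  have h : sweedCoreR k d α γ ∘ₗ
        (TensorProduct.mk k ((B ⊗[k] B) ⊗[k] (B ⊗[k] B)) A).flip x =
      TensorProduct.lift d ∘ₗ TensorProduct.map
          (TensorProduct.lift (γ.compr₂ (LinearMap.applyₗ x))) (TensorProduct.lift α) ∘ₗ
        (TensorProduct.tensorTensorTensorComm k B B B B).toLinearMap := by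
    ext
    rfl
  exact congrArg (· ∘ₗ TensorProduct.map comul comul) h

variable (S : DivBialg k A) (z : B →ₗ[k] A) (x : A)

lemma rHat_eq_conv :
    rHat k S comul z x =
      conv S.rd (conv S.mul (S.mul x ∘ₗ z ∘ₗ (tensorFst k B B).toLinearMap)
          (z ∘ₗ (tensorSnd k B B).toLinearMap))
        (TensorProduct.lift (S.mul.compl₁₂ z z)) := by
  rw [rHat, hatOf_sweedCoreR, ← LinearMap.comp_assoc, conv_comp_tensorFst_comp_tensorSnd]
  rfl

lemma sHat_eq_conv :
    sHat k S comul z x =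
      conv S.rd (conv S.mul (z ∘ₗ (tensorFst k B B).toLinearMap)
          (S.mul x ∘ₗ z ∘ₗ (tensorSnd k B B).toLinearMap))
        (TensorProduct.lift (S.mul.compl₁₂ z z)) := by
  rw [sHat, hatOf_sweedCoreR, ← LinearMap.comp_assoc _ _ (S.mul x),
    conv_comp_tensorFst_comp_tensorSnd]
  rfl

lemma sbarHat_eq_conv :
    sbarHat k S comul z x =
      conv S.ld (TensorProduct.lift (S.mul.compl₁₂ z z))
        (conv S.mul (S.mul.flip x ∘ₗ z ∘ₗ (tensorFst k B B).toLinearMap)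
          (z ∘ₗ (tensorSnd k B B).toLinearMap)) := by
  rw [sbarHat, hatOf_sweedCoreL, ← LinearMap.comp_assoc, conv_comp_tensorFst_comp_tensorSnd]
  rfl

lemma lHat_eq_conv :
    lHat k S comul z x =
      conv S.ld (TensorProduct.lift (S.mul.compl₁₂ z z))
        (conv S.mul (z ∘ₗ (tensorFst k B B).toLinearMap)
          (S.mul.flip x ∘ₗ z ∘ₗ (tensorSnd k B B).toLinearMap)) := by
  rw [lHat, hatOf_sweedCoreL, ← LinearMap.comp_assoc _ _ (S.mul.flip x),
    conv_comp_tensorFst_comp_tensorSnd]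
  rfl

end SweedlerOperators

section ProductFormula

variable {k : Type*} [Field k] {A B : Type*} [AddCommGroup A] [Module k A]
  [AddCommGroup B] [Module k B]

lemma DivBialg.isCoalgHom_coalgHom {C : Type*} [AddCommGroup C] [Module k C] [Coalgebra k C]
    (S : DivBialg k A) :
    letI := S.coalgebra
    ∀ φ : C →ₗc[k] A, S.IsCoalgHom φ.toLinearMap := by
  let _ := S.coalgebra
  refine fun φ ↦ ⟨?_, fun c ↦ LinearMap.congr_fun φ.counit_comp c⟩
  rw [Splits, conv_mk]
  exact φ.map_comp_comul.symm

lemma DivBialg.conv_mul_tensorFst_tensorSnd (S : DivBialg k B) :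
    letI := S.coalgebra
    conv S.mul (tensorFst k B B).toLinearMap (tensorSnd k B B).toLinearMap =
      TensorProduct.lift S.mul :=
  letI := S.coalgebra
  conv_comp_tensorFst_comp_tensorSnd S.mul LinearMap.id LinearMap.id

variable {SA : DivBialg k A} {SB : DivBialg k B} {π : A →ₗ[k] B} {z : B →ₗ[k] A}
  {β : A ⊗[k] A →ₗ[k] A} {x x' : A}

lemma DivBialgHom.lift_mul_compl₁₂ (hz : DivBialgHom k SB SA z) :
    TensorProduct.lift (SA.mul.compl₁₂ z z) = z ∘ₗ TensorProduct.lift SB.mul := by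
  ext b b'
  exact (hz.map_mul b b').symm

namespace IsBoxPlus

lemma mul_mul_section_eq_conv (h : IsSplitEpi SA SB π z) (hβ : IsBoxPlus SA π z β)
    (hx : x ∈ Fsub k SA SB.one π) (hx' : x' ∈ Fsub k SA SB.one π) (b b' : B) :
    letI := SB.coalgebra
    SA.mul (SA.mul x (z b)) (SA.mul x' (z b')) =
      conv SA.mul (conv SA.mul (rHat k SA SB.Δ z x) (sHat k SA SB.Δ z x'))
        (z ∘ₗ TensorProduct.lift SB.mul) (b ⊗ₜ b') := by
  let _ := SB.coalgebra
  have _ := SB.isCocomm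
  have hn := SB.isCoalgHom_coalgHom (tensorFst k B B)
  have hn' := SB.isCoalgHom_coalgHom (tensorSnd k B B)
  have h_conv := hβ.conv_mul_eq_conv_rd h hn hn'
    (h.splits_coact_mul_comp hx (h.splits_coact_section_comp hn))
    (h.splits_coact_mul_comp hx' (h.splits_coact_section_comp hn'))
  have hr := rHat_eq_conv SA z x
  have hs := sHat_eq_conv SA z x'
  rw [h.hom_section.lift_mul_compl₁₂] at hr hs
  rw [SB.conv_mul_tensorFst_tensorSnd, ← hr, ← hs, ← LinearMap.comp_assoc,
    ← LinearMap.comp_assoc, conv_comp_tensorFst_comp_tensorSnd] at h_conv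
  exact LinearMap.congr_fun h_conv (b ⊗ₜ b')

lemma section_mul_mul_eq_conv (h : IsSplitEpi SA SB π z) (hβ : IsBoxPlus SA π z β)
    (hx : x ∈ Fsub k SA SB.one π) (hx' : x' ∈ Fsub k SA SB.one π) (b b' : B) :
    letI := SB.coalgebra
    SA.mul (SA.mul (z b) x) (SA.mul (z b') x') =
      conv SA.mul (z ∘ₗ TensorProduct.lift SB.mul)
        (conv SA.mul (sbarHat k SA SB.Δ z x) (lHat k SA SB.Δ z x')) (b ⊗ₜ b') := by
  let _ := SB.coalgebra
  have _ := SB.isCocomm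
  have hn := SB.isCoalgHom_coalgHom (tensorFst k B B)
  have hn' := SB.isCoalgHom_coalgHom (tensorSnd k B B)
  have h_conv := hβ.conv_mul_eq_conv_ld h hn hn'
    (h.op.splits_coact_mul_comp hx (h.splits_coact_section_comp hn))
    (h.op.splits_coact_mul_comp hx' (h.splits_coact_section_comp hn'))
  have hs := sbarHat_eq_conv SA z x
  have hl := lHat_eq_conv SA z x'
  rw [h.hom_section.lift_mul_compl₁₂] at hs hl
  rw [SB.conv_mul_tensorFst_tensorSnd, DivBialg.op, ← hs, ← hl, ← LinearMap.comp_assoc,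
    ← LinearMap.comp_assoc, conv_comp_tensorFst_comp_tensorSnd] at h_conv
  exact LinearMap.congr_fun h_conv (b ⊗ₜ b')

end IsBoxPlus

end ProductFormula

end FormalLoops

open FormalLoops in
theorem fsub_product_formula_general {k : Type*} [Field k]
    {A B : Type*} [AddCommGroup A] [Module k A] [AddCommGroup B] [Module k B]
    {SA : DivBialg k A} {SB : DivBialg k B} {π : A →ₗ[k] B} {z : B →ₗ[k] A}
    {β : A ⊗[k] A →ₗ[k] A} (h : IsSplitEpi SA SB π z) (hβ : IsBoxPlus SA π z β)
    {x x' : A} (hx : x ∈ Fsub k SA SB.one π)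
    (hx' : x' ∈ Fsub k SA SB.one π) (b b' : B) :
    (SA.mul (SA.mul x (z b)) (SA.mul x' (z b'))
        = (TensorProduct.lift SA.mul ∘ₗ
            LinearMap.rTensor A (TensorProduct.lift SA.mul) ∘ₗ
            (TensorProduct.assoc k A A A).symm.toLinearMap ∘ₗ
            TensorProduct.map (rHat k SA SB.Δ z x)
              (TensorProduct.map (sHat k SA SB.Δ z x') (z ∘ₗ TensorProduct.lift SB.mul)) ∘ₗ
            LinearMap.lTensor (B ⊗[k] B)
              (TensorProduct.tensorTensorTensorComm k B B B B).toLinearMap ∘ₗ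
            (TensorProduct.tensorTensorTensorComm k B (B ⊗[k] B) B (B ⊗[k] B)).toLinearMap)
          (comul2 k SB.Δ b ⊗ₜ[k] comul2 k SB.Δ b')) ∧
      (SA.mul (SA.mul (z b) x) (SA.mul (z b') x')
        = (TensorProduct.lift SA.mul ∘ₗ
            LinearMap.lTensor A (TensorProduct.lift SA.mul) ∘ₗ
            TensorProduct.map (z ∘ₗ TensorProduct.lift SB.mul)
              (TensorProduct.map (sbarHat k SA SB.Δ z x) (lHat k SA SB.Δ z x')) ∘ₗ
            LinearMap.lTensor (B ⊗[k] B)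
              (TensorProduct.tensorTensorTensorComm k B B B B).toLinearMap ∘ₗ
            (TensorProduct.tensorTensorTensorComm k B (B ⊗[k] B) B (B ⊗[k] B)).toLinearMap)
          (comul2 k SB.Δ b ⊗ₜ[k] comul2 k SB.Δ b')) := by
  let _ := SB.coalgebra
  have h_comul := lTensor_tensorTensorTensorComm_comul2_tmul (k := k) b b'
  constructor
  · rw [hβ.mul_mul_section_eq_conv h hx hx', conv_conv_left_apply, ← h_comul]
    rfl
  · rw [hβ.section_mul_mul_eq_conv h hx hx', conv_conv_right_apply, ← h_comul]
    rfl

open FormalLoops in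
/-- for `x, x' ∈ F(A)` and `b, b' ∈ B`,
`(x·b)·(x'·b') = Σ (r(b₍₁₎,b'₍₁₎)x · s(b₍₂₎,b'₍₂₎)x') · (b₍₃₎b'₍₃₎)` and
`(b·x)·(b'·x') = Σ (b₍₁₎b'₍₁₎) · (s̄(b₍₂₎,b'₍₂₎)x · l(b₍₃₎,b'₍₃₎)x')`. -/
theorem fsub_product_formula
    (k : Type*) [Field k] [CharZero k]
    {A B : Type*} [AddCommGroup A] [Module k A] [AddCommGroup B] [Module k B]
    (SA : DivBialg k A) (SB : DivBialg k B)
    (π : A →ₗ[k] B) (z : B →ₗ[k] A)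
    (hπ : DivBialgHom k SA SB π) (hz : DivBialgHom k SB SA z)
    (hsec : π ∘ₗ z = LinearMap.id)
    (P : BoxPlusData k SA SB π z)
    (F : Submodule k A) (hF : F = Fsub k SA SB.one π) :
    ∀ x ∈ F, ∀ x' ∈ F, ∀ b b' : B,
      (SA.mul (SA.mul x (z b)) (SA.mul x' (z b'))
        = (TensorProduct.lift SA.mul ∘ₗ
            LinearMap.rTensor A (TensorProduct.lift SA.mul) ∘ₗ
            (TensorProduct.assoc k A A A).symm.toLinearMap ∘ₗ
            TensorProduct.map (rHat k SA SB.Δ z x)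
              (TensorProduct.map (sHat k SA SB.Δ z x') (z ∘ₗ TensorProduct.lift SB.mul)) ∘ₗ
            LinearMap.lTensor (B ⊗[k] B)
              (TensorProduct.tensorTensorTensorComm k B B B B).toLinearMap ∘ₗ
            (TensorProduct.tensorTensorTensorComm k B (B ⊗[k] B) B (B ⊗[k] B)).toLinearMap)
          (comul2 k SB.Δ b ⊗ₜ[k] comul2 k SB.Δ b')) ∧
      (SA.mul (SA.mul (z b) x) (SA.mul (z b') x')
        = (TensorProduct.lift SA.mul ∘ₗ
            LinearMap.lTensor A (TensorProduct.lift SA.mul) ∘ₗ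
            TensorProduct.map (z ∘ₗ TensorProduct.lift SB.mul)
              (TensorProduct.map (sbarHat k SA SB.Δ z x) (lHat k SA SB.Δ z x')) ∘ₗ
            LinearMap.lTensor (B ⊗[k] B)
              (TensorProduct.tensorTensorTensorComm k B B B B).toLinearMap ∘ₗ
            (TensorProduct.tensorTensorTensorComm k B (B ⊗[k] B) B (B ⊗[k] B)).toLinearMap)
          (comul2 k SB.Δ b ⊗ₜ[k] comul2 k SB.Δ b')) := by
  obtain ⟨β, hβ⟩ := P.exists_isBoxPlus ⟨hπ, hz, hsec⟩
  subst hF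
  exact fun x hx x' hx' ↦ fsub_product_formula_general ⟨hπ, hz, hsec⟩ hβ hx hx'
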